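/- Every bridgeless graph of order n ≥ 5 with at least n + 3 edges has an orientation of diameter at most n - 2. -/

import Mathlib

open SimpleGraph

/-- `R` is an orientation of the simple graph `G`: every arc of `R` lies on an edge of `G`,
and every edge of `G` receives exactly one of its two possible directions. -/
def IsOrientation {V : Type*} (G : SimpleGraph V) (R : V → V → Prop) : Prop :=
  (∀ u v, R u v → G.Adj u v) ∧ ∀ u v, G.Adj u v → (R u v ↔ ¬ R v u)

/-- `RelPow R k u v` : there is a directed walk of length `k` from `u` to `v`. -/
def RelPow {V : Type*} (R : V → V → Prop) : ℕ → V → V → Prop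
  | 0, u, v => u = v
  | n + 1, u, v => ∃ w, R u w ∧ RelPow R n w v

/-- The digraph `R` has diameter at most `d`: any vertex can reach any other by a
directed walk of length at most `d`. -/
def DiamLE {V : Type*} (R : V → V → Prop) (d : ℕ) : Prop :=
  ∀ u v, ∃ k ≤ d, RelPow R k u v

/-- A digraph is strongly connected if every vertex can reach every other. -/
def StronglyConnected {V : Type*} (R : V → V → Prop) : Prop :=
  ∀ u v, Relation.ReflTransGen R u v

/-- A graph is bridgeless if it is connected and contains no bridge. -/
def Bridgeless {V : Type*} (G : SimpleGraph V) : Prop :=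
  G.Connected ∧ ∀ e, ¬ G.IsBridge e

/-- The graph `G_{n,d}`: the path `u_1 … u_d` is the set of indices `0,…,d-1`,
the clique `K_{n-d-1}` is the set of indices `d,…,n-2`, both endpoints `0` and `d-1`
of the path are joined to all clique vertices, and the extra vertex `u_3'` is the
index `n-1`, joined to `u_2, u_3, u_4`, i.e. to indices `1, 2, 3`. -/
def Gnd (n d : ℕ) : SimpleGraph (Fin n) :=
  SimpleGraph.fromRel (fun i j =>
    ((i : ℕ) + 1 = (j : ℕ) ∧ (j : ℕ) < d) ∨
    (d ≤ (i : ℕ) ∧ (i : ℕ) < n - 1 ∧ d ≤ (j : ℕ) ∧ (j : ℕ) < n - 1) ∨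
    (((i : ℕ) = 0 ∨ (i : ℕ) = d - 1) ∧ d ≤ (j : ℕ) ∧ (j : ℕ) < n - 1) ∨
    ((i : ℕ) = n - 1 ∧ ((j : ℕ) = 1 ∨ (j : ℕ) = 2 ∨ (j : ℕ) = 3)))

/-- The graph `H_{n,n-2}`: the cycle `u_1 … u_{n-1} u_1` is the set of indices
`0,…,n-2` in cyclic order, and the extra vertex `u_3'` is the index `n-1`,
joined to `u_2, u_3, u_4`, i.e. to indices `1, 2, 3`. -/
def Hgraph (n : ℕ) : SimpleGraph (Fin n) :=
  SimpleGraph.fromRel (fun i j =>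
    ((i : ℕ) + 1 = (j : ℕ) ∧ (j : ℕ) ≤ n - 2) ∨
    ((i : ℕ) = 0 ∧ (j : ℕ) = n - 2) ∨
    ((i : ℕ) = n - 1 ∧ ((j : ℕ) = 1 ∨ (j : ℕ) = 2 ∨ (j : ℕ) = 3)))

/-!
Orient `G` strongly (Robbins). If a shortest directed walk is longer than `n - 2`, it is a
Hamiltonian path, say with vertices `0, …, N` where `N = n - 1`, and the remaining edges are at
least four chords of this path. It suffices to reorient `G` so that between any two vertices some
directed walk misses a vertex: a shortest such walk has length at most `n - 2`.

By strong connectivity the chords cross every gap of the path. Take the longest chords `(0, b)`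
and `(c, N)` at its two ends.
* If `b = N` the path closes to a Hamiltonian cycle, and if `c ≤ b` two directed cycles overlap.
  Direct the path upwards; the other chords can be directed so as to provide the missing shortcuts,
  and four chords are enough for this.
* If `b < c`, let `(a, q)` be the chord crossing from `[0, b]` that reaches furthest up. When
  `a < b`, chords directed downwards strongly connect a middle segment `[a, d]`, which leaves
  `(0, b)` and `(c, N)` free to serve as shortcuts around `a`. When `a = b`, directing the path
  downwards on an initial part of `[b, q]` turns `(b, q)` into a shortcut around `b + 1`.
  Exchanging the ends of the path covers the remaining cases, except that of three consecutive
  cycles `(0, b)`, `(b, c)`, `(c, N)`, where again a fourth chord is used.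
-/

open Relation

section PartialOrientation

variable {V : Type*} {G : SimpleGraph V} {R : V → V → Prop}

/-- An orientation of some of the edges of `G`: arcs lie on edges, and no edge is used in both
directions. -/
structure IsPartialOrientation (G : SimpleGraph V) (R : V → V → Prop) : Prop where
  adj : ∀ {u v}, R u v → G.Adj u v
  asymm : ∀ {u v}, R u v → ¬ R v u

theorem IsOrientation.isPartialOrientation (hR : IsOrientation G R) : IsPartialOrientation G R where
  adj := hR.1 _ _
  asymm h := (hR.2 _ _ (hR.1 _ _ h)).mp h

theorem IsPartialOrientation.exists_isOrientation_ge (hR : IsPartialOrientation G R) :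
    ∃ R', IsOrientation G R' ∧ R ≤ R' := by
  refine ⟨fun u v => R u v ∨ (G.Adj u v ∧ ¬ R v u ∧ WellOrderingRel u v), ⟨?_, ?_⟩,
    fun u v h => Or.inl h⟩
  · rintro u v (h | h)
    exacts [hR.adj h, h.1]
  · intro u v huv
    constructor
    · rintro (h | ⟨-, h, hlt⟩) (h' | ⟨-, h', hlt'⟩)
      exacts [hR.asymm h h', h' h, h h', _root_.asymm hlt hlt']
    · intro h
      have hvu : ¬ R v u := fun h' => h (Or.inl h')
      by_cases huv' : R u v
      · exact Or.inl huv'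
      · rcases trichotomous_of WellOrderingRel u v with hlt | heq | hgt
        exacts [Or.inr ⟨huv, hvu, hlt⟩, absurd heq huv.ne, absurd (Or.inr ⟨huv.symm, huv', hgt⟩) h]

end PartialOrientation

section Robbins

variable {V : Type*} {G : SimpleGraph V} {R : V → V → Prop}

theorem exists_rel_mem_notMem_of_reflTransGen {s : Set V} {x y : V} (h : ReflTransGen R x y)
    (hx : x ∈ s) (hy : y ∉ s) : ∃ a b, R a b ∧ a ∈ s ∧ b ∉ s := by
  induction h with
  | refl => exact absurd hx hy
  | @tail b c _ hbc ih =>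
    by_cases hb : b ∈ s
    · exact ⟨b, c, hbc, hb, hy⟩
    · exact ih hb

/-- The strong component of `r` in the digraph `R`. -/
def strongComponent (R : V → V → Prop) (r : V) : Set V :=
  {z | ReflTransGen R r z ∧ ReflTransGen R z r}

/-- The arcs used to enlarge a strongly connected vertex set `A` by an ear: those of `R` inside
`A`, one arc from `u ∈ A` to `v ∉ A`, and, outside `A`, all edges of `G - uv` directed so as to
decrease the distance to `u`. -/
inductive EarExtension (G : SimpleGraph V) (R : V → V → Prop) (A : Set V) (u v : V) :
    V → V → Prop
  | inside {x y} : x ∈ A → y ∈ A → R x y → EarExtension G R A u v x y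
  | exit : EarExtension G R A u v u v
  | back {x y} : x ∉ A → (G.deleteEdges {s(u, v)}).Adj x y →
      (G.deleteEdges {s(u, v)}).dist y u < (G.deleteEdges {s(u, v)}).dist x u →
      EarExtension G R A u v x y

theorem IsPartialOrientation.earExtension (hR : IsPartialOrientation G R) {A : Set V} {u v : V}
    (huv : G.Adj u v) (hu : u ∈ A) (hv : v ∉ A) :
    IsPartialOrientation G (EarExtension G R A u v) where
  adj := by
    rintro x y (⟨-, -, h⟩ | _ | ⟨-, h, -⟩)
    exacts [hR.adj h, huv, deleteEdges_le _ h]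
  asymm := by
    have not_adj : ¬ (G.deleteEdges {s(u, v)}).Adj v u := by
      simp [deleteEdges_adj, Sym2.eq_swap]
    rintro x y (⟨hx, hy, h⟩ | _ | ⟨hx, h, hlt⟩) (⟨hy', hx', h'⟩ | _ | ⟨hy', h', hlt'⟩)
    exacts [hR.asymm h h', hv hx, hy' hy, hv hy', hv hu, not_adj h', hx hx', not_adj h,
      lt_asymm hlt hlt']

theorem exists_mem_reflTransGen_earExtension {A : Set V} {u v x : V} (hu : u ∈ A)
    (hx : (G.deleteEdges {s(u, v)}).Reachable x u) :
    ∃ a ∈ A, ReflTransGen (EarExtension G R A u v) x a := by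
  induction hd : (G.deleteEdges {s(u, v)}).dist x u using Nat.strong_induction_on
    generalizing x with
  | _ d ih =>
    by_cases hxA : x ∈ A
    · exact ⟨x, hxA, .refl⟩
    obtain ⟨walk, hwalk⟩ := hx.exists_walk_length_eq_dist
    cases walk with
    | nil => exact absurd hu hxA
    | @cons _ y _ hxy walk =>
      rw [Walk.length_cons] at hwalk
      have hlt := dist_le walk
      obtain ⟨a, ha, hya⟩ := ih _ (by omega) walk.reachable rfl
      exact ⟨a, ha, .head (.back hxA hxy (by omega)) hya⟩

theorem insert_subset_strongComponent_earExtension {r u v : V} (hu : u ∈ strongComponent R r)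
    (hvu : (G.deleteEdges {s(u, v)}).Reachable v u) :
    insert v (strongComponent R r) ⊆
      strongComponent (EarExtension G R (strongComponent R r) u v) r := by
  set A := strongComponent R r
  have hr : r ∈ A := ⟨.refl, .refl⟩
  have inside : ∀ {x y}, x ∈ A → y ∈ A → ReflTransGen (EarExtension G R A u v) x y := by
    intro x y hx hy
    have hxy : ReflTransGen R x y := hx.2.trans hy.1
    induction hxy using ReflTransGen.head_induction_on with
    | refl => exact .refl
    | @head b c hbc hcy ih =>
      have hc : c ∈ A := ⟨hx.1.tail hbc, hcy.trans hy.2⟩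
      exact .head (.inside hx hc hbc) (ih hc)
  obtain ⟨a, ha, hva⟩ := exists_mem_reflTransGen_earExtension (R := R) hu hvu
  exact Set.insert_subset ⟨(inside hr hu).tail .exit, hva.trans (inside ha hr)⟩
    fun z hz => ⟨inside hr hz, inside hz hr⟩

/-- **Robbins' theorem**. -/
theorem Bridgeless.exists_stronglyConnected_isOrientation [Finite V] (hG : Bridgeless G) :
    ∃ R, IsOrientation G R ∧ StronglyConnected R := by
  obtain ⟨hconn, hbridge⟩ := hG
  obtain ⟨r⟩ := hconn.nonempty
  obtain ⟨R, hR, hmax⟩ := Set.exists_max_image {R | IsPartialOrientation G R}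
    (fun R => (strongComponent R r).ncard) (Set.toFinite _)
    ⟨fun _ _ => False, False.elim, False.elim⟩
  have component_eq_univ : ∀ z, z ∈ strongComponent R r := by
    by_contra! hz
    obtain ⟨z, hz⟩ := hz
    obtain ⟨u, v, huv, hu, hv⟩ := exists_rel_mem_notMem_of_reflTransGen
      ((reachable_iff_reflTransGen _ _).mp (hconn.preconnected r z))
      (show r ∈ strongComponent R r from ⟨.refl, .refl⟩) hz
    have hvu : (G.deleteEdges {s(u, v)}).Reachable v u := by
      have := hbridge s(u, v)
      rw [isBridge_iff, not_not] at this
      exact this.symm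
    have hcard := Set.ncard_le_ncard (insert_subset_strongComponent_earExtension hu hvu)
    rw [Set.ncard_insert_of_notMem hv] at hcard
    have := hmax _ (hR.earExtension huv hu hv)
    omega
  obtain ⟨R', hR', hle⟩ := hR.exists_isOrientation_ge
  exact ⟨R', hR', fun x y =>
    ReflTransGen.mono hle _ _ ((component_eq_univ x).2.trans (component_eq_univ y).1)⟩

end Robbins

section DirectedPaths

variable {V : Type*} {R S : V → V → Prop} {x y z : V} {k l : ℕ}

theorem RelPow.trans (hxy : RelPow R k x y) (hyz : RelPow R l y z) : RelPow R (k + l) x z := by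
  induction k generalizing x with
  | zero => obtain rfl : x = y := hxy; rwa [Nat.zero_add]
  | succ k ih =>
    obtain ⟨w, hxw, hwy⟩ := hxy
    rw [Nat.add_right_comm]
    exact ⟨w, hxw, ih hwy⟩

theorem RelPow.mono (hRS : R ≤ S) (h : RelPow R k x y) : RelPow S k x y := by
  induction k generalizing x with
  | zero => exact h
  | succ k ih =>
    obtain ⟨w, hxw, hwy⟩ := h
    exact ⟨w, hRS _ _ hxw, ih hwy⟩

theorem DiamLE.mono (hRS : R ≤ S) (h : DiamLE R k) : DiamLE S k := fun x y =>
  let ⟨l, hl, hxy⟩ := h x y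
  ⟨l, hl, hxy.mono hRS⟩

theorem exists_relPow_of_reflTransGen (h : ReflTransGen R x y) : ∃ k, RelPow R k x y := by
  induction h using ReflTransGen.head_induction_on with
  | refl => exact ⟨0, rfl⟩
  | head hxw _ ih =>
    obtain ⟨k, hk⟩ := ih
    exact ⟨k + 1, _, hxw, hk⟩

theorem RelPow.exists_seq (h : RelPow R k x y) :
    ∃ p : ℕ → V, p 0 = x ∧ p k = y ∧ ∀ i < k, R (p i) (p (i + 1)) := by
  induction k generalizing x with
  | zero => exact ⟨fun _ => x, rfl, h, nofun⟩
  | succ k ih =>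
    obtain ⟨w, hxw, hwy⟩ := h
    obtain ⟨p, rfl, hk, harc⟩ := ih hwy
    refine ⟨fun i => Nat.casesOn i x p, rfl, hk, ?_⟩
    rintro (_ | i) hi
    exacts [hxw, harc i (by omega)]

theorem relPow_of_seq {p : ℕ → V} (harc : ∀ i < k, R (p i) (p (i + 1))) {i j : ℕ} (hij : i ≤ j)
    (hjk : j ≤ k) : RelPow R (j - i) (p i) (p j) := by
  induction j, hij using Nat.le_induction with
  | base => rw [Nat.sub_self]; rfl
  | succ j hij ih =>
    rw [Nat.sub_add_comm hij]
    exact (ih (by omega)).trans ⟨_, harc j hjk, rfl⟩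

/-- `p 0, p 1, …, p k` is a directed path of length `k` in the digraph `R`; the values of `p`
beyond `k` are irrelevant. -/
structure IsDirectedPath (R : V → V → Prop) (k : ℕ) (p : ℕ → V) : Prop where
  arc : ∀ i < k, R (p i) (p (i + 1))
  injOn : Set.InjOn p (Set.Iic k)

theorem exists_isDirectedPath_of_reflTransGen (h : ReflTransGen R x y) :
    ∃ k p, IsDirectedPath R k p ∧ p 0 = x ∧ p k = y := by
  classical
  have hex := exists_relPow_of_reflTransGen h
  obtain ⟨p, rfl, hk, harc⟩ := (Nat.find_spec hex).exists_seq
  refine ⟨Nat.find hex, p, ⟨harc, ?_⟩, rfl, hk⟩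
  -- A repeated vertex would allow a shortcut in the shortest walk.
  have le_of_eq : ∀ i ≤ Nat.find hex, ∀ j ≤ Nat.find hex, p i = p j → j ≤ i := by
    intro i hi j hj hij
    have shortcut := hij ▸ relPow_of_seq harc (Nat.zero_le i) hi
    have := Nat.find_min' hex (hk ▸ shortcut.trans (relPow_of_seq harc hj le_rfl))
    omega
  exact fun i hi j hj hij => le_antisymm (le_of_eq j hj i hi hij.symm) (le_of_eq i hi j hj hij)

namespace IsDirectedPath

variable {p : ℕ → V}

theorem relPow (hp : IsDirectedPath R k p) : RelPow R k (p 0) (p k) :=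
  relPow_of_seq hp.arc (Nat.zero_le k) le_rfl

theorem length_lt_card (hp : IsDirectedPath R k p) {s : Finset V} (hs : ∀ i ≤ k, p i ∈ s) :
    k < s.card := by
  have := Finset.card_le_card_of_injOn (s := Finset.Iic k) p (by simpa [Set.MapsTo] using hs)
    (by simpa using hp.injOn)
  rwa [Nat.card_Iic] at this

theorem bijOn_univ [Fintype V] (hp : IsDirectedPath R k p) (hk : Fintype.card V ≤ k + 1) :
    Set.BijOn p (Set.Iic k) Set.univ := by
  refine ⟨Set.mapsTo_univ _ _, hp.injOn, ?_⟩
  have := Finset.surjOn_of_injOn_of_card_le (s := Finset.Iic k) (t := Finset.univ) p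
    (fun _ _ => Finset.mem_coe.mpr (Finset.mem_univ _)) (by simpa using hp.injOn)
    (by simpa using hk)
  simpa using this

end IsDirectedPath

theorem StronglyConnected.diamLE_or_exists_hamiltonian_path [Fintype V]
    (hR : StronglyConnected R) :
    DiamLE R (Fintype.card V - 2) ∨
      ∃ N p, IsDirectedPath R N p ∧ Set.BijOn p (Set.Iic N) Set.univ := by
  rw [or_iff_not_imp_left]
  intro hdiam
  simp only [DiamLE, not_forall, not_exists, not_and] at hdiam
  obtain ⟨x, y, hxy⟩ := hdiam
  obtain ⟨N, p, hp, rfl, rfl⟩ := exists_isDirectedPath_of_reflTransGen (hR x y)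
  have hN : ¬ N ≤ Fintype.card V - 2 := fun hN => hxy N hN hp.relPow
  exact ⟨N, p, hp, hp.bijOn_univ (by omega)⟩

end DirectedPaths

section Detours

variable {α β : Type*}

/-- `R` contains a directed walk from one vertex to another that does not meet `w`. -/
abbrev ReachesAvoiding (R : α → α → Prop) (w : α) : α → α → Prop :=
  ReflTransGen fun a b => R a b ∧ a ≠ w ∧ b ≠ w

/-- `R` contains a directed walk from `x` to `y` that misses at least one vertex of `s`. When this
holds for all distinct `x, y ∈ s`, distances within `s` are at most `#s - 2`. -/
def HasDetour (R : α → α → Prop) (s : Set α) (x y : α) : Prop :=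
  ∃ w ∈ s, w ≠ x ∧ w ≠ y ∧ ReachesAvoiding R w x y

theorem pairwise_hasDetour_of_bijOn {R : α → α → Prop} {S : β → β → Prop} {s : Set α} {t : Set β}
    {f : α → β} (hf : Set.BijOn f s t) (hR : ∀ a b, R a b → a ∈ s ∧ b ∈ s ∧ S (f a) (f b))
    (h : s.Pairwise (HasDetour R s)) : t.Pairwise (HasDetour S t) := by
  intro _ hfx _ hfy hxy
  obtain ⟨x, hx, rfl⟩ := hf.surjOn hfx
  obtain ⟨y, hy, rfl⟩ := hf.surjOn hfy
  obtain ⟨w, hw, hwx, hwy, hwalk⟩ := h hx hy (ne_of_apply_ne f hxy)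
  refine ⟨f w, hf.mapsTo hw, hf.injOn.ne hw hx hwx, hf.injOn.ne hw hy hwy, hwalk.lift f ?_⟩
  rintro a b ⟨hab, haw, hbw⟩
  obtain ⟨ha, hb, hS⟩ := hR a b hab
  exact ⟨hS, hf.injOn.ne ha hw haw, hf.injOn.ne hb hw hbw⟩

theorem diamLE_of_pairwise_hasDetour [Fintype α] {R : α → α → Prop}
    (h : Set.univ.Pairwise (HasDetour R Set.univ)) : DiamLE R (Fintype.card α - 2) := by
  classical
  intro x y
  obtain rfl | hxy := eq_or_ne x y
  · exact ⟨0, Nat.zero_le _, rfl⟩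
  obtain ⟨w, -, hwx, -, hwalk⟩ := h trivial trivial hxy
  obtain ⟨k, p, hp, rfl, rfl⟩ := exists_isDirectedPath_of_reflTransGen hwalk
  have hpw : ∀ i ≤ k, p i ∈ Finset.univ.erase w := by
    rintro (_ | i) hi
    · simpa using hwx.symm
    · simpa using (hp.arc i hi).2.2
  have hlt := hp.length_lt_card hpw
  rw [Finset.card_erase_of_mem (Finset.mem_univ w), Finset.card_univ] at hlt
  exact ⟨k, by omega, hp.relPow.mono fun _ _ hab => hab.1⟩

end Detours

section ChordOrientations

/-- The vertices `0, …, N` form a path with edges `{i, i + 1}`; the pairs `(a, b) ∈ C` are chords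
joining vertices `a < b` of this path that are not consecutive. -/
def IsChordSet (N : ℕ) (C : Finset (ℕ × ℕ)) : Prop :=
  ∀ ⦃a b⦄, (a, b) ∈ C → a + 2 ≤ b ∧ b ≤ N

/-- The orientation of a path with chords in which the path edge `{i, i + 1}` points up, that is
towards `i + 1`, iff `i ∈ up`, and a chord points up iff it is in `F`. -/
inductive ChordOrientation (N : ℕ) (C : Finset (ℕ × ℕ)) (up : Set ℕ) (F : Set (ℕ × ℕ)) :
    ℕ → ℕ → Prop
  | stepUp {i} : i < N → i ∈ up → ChordOrientation N C up F i (i + 1)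
  | stepDown {i} : i < N → i ∉ up → ChordOrientation N C up F (i + 1) i
  | chordUp {a b} : (a, b) ∈ C → (a, b) ∈ F → ChordOrientation N C up F a b
  | chordDown {a b} : (a, b) ∈ C → (a, b) ∉ F → ChordOrientation N C up F b a

theorem HasDetour.of_reachesAvoiding {R : ℕ → ℕ → Prop} {N w x y : ℕ}
    (h : ReachesAvoiding R w x y) (hw : w ≤ N := by omega) (hwx : w ≠ x := by omega)
    (hwy : w ≠ y := by omega) : HasDetour R (Set.Iic N) x y :=
  ⟨w, hw, hwx, hwy, h⟩

variable {N : ℕ} {C : Finset (ℕ × ℕ)} {up : Set ℕ} {F : Set (ℕ × ℕ)} {a b u v w : ℕ}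

namespace ChordOrientation

theorem asymm (hC : IsChordSet N C) (huv : ChordOrientation N C up F u v) :
    ¬ ChordOrientation N C up F v u := by
  have length_ge : ∀ {a b}, (a, b) ∈ C → a + 2 ≤ b := fun h => (hC h).1
  rintro (_ | _ | _ | _) <;> cases huv <;> grind

theorem le (hC : IsChordSet N C) (huv : ChordOrientation N C up F u v) : u ≤ N ∧ v ≤ N := by
  rcases huv with ⟨hi, -⟩ | ⟨hi, -⟩ | ⟨hab, -⟩ | ⟨hab, -⟩
  · omega
  · omega
  all_goals have := hC hab; omega

theorem ascend (hup : ∀ i, u ≤ i → i < v → i ∈ up := by intros; simp <;> omega)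
    (huv : u ≤ v := by omega) (hvN : v ≤ N := by omega) (hw : w < u ∨ v < w := by omega) :
    ReachesAvoiding (ChordOrientation N C up F) w u v := by
  refine reflTransGen_of_succ_of_le _ (fun i hi => ?_) huv
  obtain ⟨hui, hiv⟩ := hi
  exact ⟨.stepUp (by omega) (hup i hui hiv), by omega, by rw [Order.succ_eq_add_one]; omega⟩

theorem descend (hup : ∀ i, u ≤ i → i < v → i ∉ up := by intros; simp <;> omega)
    (huv : u ≤ v := by omega) (hvN : v ≤ N := by omega) (hw : w < u ∨ v < w := by omega) :
    ReachesAvoiding (ChordOrientation N C up F) w v u := by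
  refine reflTransGen_of_succ_of_ge _ (fun i hi => ?_) huv
  obtain ⟨hui, hiv⟩ := hi
  exact ⟨.stepDown (by omega) (hup i hui hiv), by rw [Order.succ_eq_add_one]; omega, by omega⟩

theorem jumpUp (hab : (a, b) ∈ C) (hF : (a, b) ∈ F := by simp <;> omega)
    (haw : a ≠ w := by omega) (hbw : b ≠ w := by omega) :
    ReachesAvoiding (ChordOrientation N C up F) w a b :=
  .single ⟨.chordUp hab hF, haw, hbw⟩

theorem jumpDown (hab : (a, b) ∈ C) (hF : (a, b) ∉ F := by simp <;> omega)
    (haw : a ≠ w := by omega) (hbw : b ≠ w := by omega) :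
    ReachesAvoiding (ChordOrientation N C up F) w b a :=
  .single ⟨.chordDown hab hF, hbw, haw⟩

/-- If the path points up and some chord `(p, q)` does too, then a walk from below to above can
use that chord to bypass `p + 1`, unless it misses an end of the path anyway. -/
theorem hasDetour_of_lt (hC : IsChordSet N C) {p q x y : ℕ} (hpq : (p, q) ∈ C) (hF : (p, q) ∈ F)
    (hxy : x < y) (hy : y ≤ N) :
    HasDetour (ChordOrientation N C Set.univ F) (Set.Iic N) x y := by
  have := hC hpq
  rcases Nat.eq_zero_or_pos x with rfl | hx
  · rcases hy.lt_or_eq with hy | rfl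
    · exact .of_reachesAvoiding (w := N) ascend
    · exact .of_reachesAvoiding (w := p + 1) <|
        (ascend).trans <| (jumpUp hpq hF).trans ascend
  · exact .of_reachesAvoiding (w := 0) ascend

end ChordOrientation

/-- Some orientation of the path `0, …, N` with chords `C` provides a detour between any two
vertices. -/
def Detourable (N : ℕ) (C : Finset (ℕ × ℕ)) : Prop :=
  ∃ up F, (Set.Iic N).Pairwise (HasDetour (ChordOrientation N C up F) (Set.Iic N))

/-- The chords obtained from `C` by reversing the path `0, …, N`. -/
def mirror (N : ℕ) (C : Finset (ℕ × ℕ)) : Finset (ℕ × ℕ) :=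
  C.image fun q => (N - q.2, N - q.1)

theorem mem_mirror (hC : IsChordSet N C) : (a, b) ∈ mirror N C ↔ b ≤ N ∧ (N - b, N - a) ∈ C := by
  simp only [mirror, Finset.mem_image, Prod.exists, Prod.mk.injEq]
  constructor
  · rintro ⟨c, d, hcd, rfl, rfl⟩
    have := hC hcd
    rw [Nat.sub_sub_self this.2, Nat.sub_sub_self (by omega)]
    exact ⟨Nat.sub_le _ _, hcd⟩
  · rintro ⟨hb, hab⟩
    have := hC hab
    exact ⟨_, _, hab, by omega, by omega⟩

theorem sub_mem_mirror (hab : (a, b) ∈ C) : (N - b, N - a) ∈ mirror N C :=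
  Finset.mem_image_of_mem (fun q : ℕ × ℕ => (N - q.2, N - q.1)) hab

theorem IsChordSet.mirror (hC : IsChordSet N C) : IsChordSet N (mirror N C) := by
  intro a b hab
  obtain ⟨hb, hab⟩ := (mem_mirror hC).mp hab
  have := hC hab
  omega

theorem ChordOrientation.of_mirror (hC : IsChordSet N C)
    (h : ChordOrientation N (mirror N C) up F u v) :
    ChordOrientation N C {i | N - 1 - i ∉ up} {q | (N - q.2, N - q.1) ∉ F} (N - u) (N - v) := by
  have twice : ∀ {a b}, (a, b) ∈ mirror N C → (N - (N - a), N - (N - b)) = (a, b) := by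
    intro a b hab
    have := hC.mirror hab
    rw [Nat.sub_sub_self this.2, Nat.sub_sub_self (by omega)]
  rcases h with ⟨hi, hup⟩ | ⟨hi, hup⟩ | ⟨hab, hF⟩ | ⟨hab, hF⟩
  · rw [show N - u = N - (u + 1) + 1 by omega]
    refine .stepDown (by omega) ?_
    rwa [Set.mem_ofPred_eq, not_not, show N - 1 - (N - (u + 1)) = u by omega]
  · rw [show N - v = N - (v + 1) + 1 by omega]
    refine .stepUp (by omega) ?_
    rwa [Set.mem_ofPred_eq, show N - 1 - (N - (v + 1)) = v by omega]
  · exact .chordDown ((mem_mirror hC).mp hab).2 (by simpa [twice hab] using hF)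
  · exact .chordUp ((mem_mirror hC).mp hab).2 (by simpa [twice hab] using hF)

theorem Detourable.of_mirror (hC : IsChordSet N C) (h : Detourable N (mirror N C)) :
    Detourable N C := by
  obtain ⟨up, F, h⟩ := h
  have reversal : Set.BijOn (N - ·) (Set.Iic N) (Set.Iic N) := by
    refine ⟨fun i _ => Nat.sub_le N i, fun i hi j hj hij => ?_, fun i hi => ⟨N - i, ?_⟩⟩ <;>
      simp only [Set.mem_Iic] at * <;> omega
  exact ⟨_, _, pairwise_hasDetour_of_bijOn reversal (fun i j hij =>
    ⟨(hij.le hC.mirror).1, (hij.le hC.mirror).2, hij.of_mirror hC⟩) h⟩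

/-- The chords of `C` with ends in `{l} ∪ (w, r]` cross every gap between `v - 1` and `v` with
`w < v ≤ r`. For `w = l` these are the chords inside the interval `[l, r]`. -/
def Spans (C : Finset (ℕ × ℕ)) (l w r : ℕ) : Prop :=
  ∀ v, w < v → v ≤ r → ∃ a b, (a, b) ∈ C ∧ (a = l ∨ w < a) ∧ a < v ∧ v ≤ b ∧ b ≤ r

theorem Spans.fill {l w r : ℕ} (h : Spans C l w r) (hlw : l ≤ w) (hwr : w < r) :
    Spans C l l r := by
  intro v hlv hvr
  obtain ⟨a, b, hab, ha, hav, hvb, hbr⟩ := h (max v (w + 1)) (by omega) (by omega)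
  by_cases hvw : w < v
  · exact ⟨a, b, hab, by omega, by omega, by omega, hbr⟩
  · exact ⟨a, b, hab, by omega, by omega, by omega, hbr⟩

theorem Spans.mirror (h : Spans C 0 0 N) : Spans (mirror N C) 0 0 N := by
  intro v hv hvN
  obtain ⟨a, b, hab, -, hav, hvb, hbN⟩ := h (N - v + 1) (by omega) (by omega)
  exact ⟨_, _, sub_mem_mirror hab, by omega, by omega, by omega, by omega⟩

theorem Spans.reachesAvoiding {l w r z : ℕ} (h : Spans C l w r) (hrN : r ≤ N)
    (hup : ∀ i, w < i → i < r → i ∈ up)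
    (hF : ∀ a b, (a, b) ∈ C → a = l ∨ w < a → b ≤ r → (a, b) ∉ F)
    (hz : z ≠ l) (hzr : z ≤ w ∨ r < z) (hv : v = l ∨ w < v) (hvr : v ≤ r) :
    ReachesAvoiding (ChordOrientation N C up F) z v l := by
  induction v using Nat.strong_induction_on with
  | _ v ih =>
    rcases hv with rfl | hwv
    · exact .refl
    obtain ⟨a, b, hab, ha, hav, hvb, hbr⟩ := h v hwv hvr
    have climb : ReachesAvoiding (ChordOrientation N C up F) z v b :=
      ChordOrientation.ascend fun i hi hib => hup i (by omega) (by omega)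
    exact climb.trans <| (ChordOrientation.jumpDown hab (hF a b hab ha hbr)).trans <|
      ih a hav ha (by omega)

open ChordOrientation

/-- Three intervals cannot be shattered by points. -/
theorem exists_subset_forall_exists_mem_iff_notMem_Ico {S : Finset (ℕ × ℕ)} (hS : 2 < S.card) :
    ∃ F ⊆ S, ∀ t, ∃ q ∈ S, (q ∈ F ↔ t ∉ Finset.Ico q.1 q.2) := by
  by_contra! h
  have trace : ∀ F ⊆ S, ∃ t, ∀ q ∈ S, q ∈ F ↔ t ∈ Finset.Ico q.1 q.2 := by
    intro F hF
    obtain ⟨t, ht⟩ := h F hF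
    exact ⟨t, fun q hq => by have := ht q hq; tauto⟩
  obtain ⟨c, hc⟩ := trace S subset_rfl
  have private_point : ∀ q ∈ S, ∃ t, ∀ q' ∈ S, q' = q ↔ t ∈ Finset.Ico q'.1 q'.2 := by
    intro q hq
    simpa only [Finset.mem_singleton] using trace {q} (Finset.singleton_subset_iff.mpr hq)
  choose! t ht using private_point
  -- Private points of two intervals through `c` are separated by `c`, so there are at most two.
  have separated : ∀ q ∈ S, ∀ q' ∈ S, q ≠ q' →
      (t q < c ∧ c < t q') ∨ (t q' < c ∧ c < t q) := by
    intro q hq q' hq' hne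
    have hqc := (hc q hq).mp hq
    have hqc' := (hc q' hq').mp hq'
    have hqq := (ht q hq q hq).mp rfl
    have hqq' := (ht q' hq' q' hq').mp rfl
    have hnq := mt (ht q hq q' hq').mpr hne.symm
    have hnq' := mt (ht q' hq' q hq).mpr hne
    simp only [Finset.mem_Ico] at *
    omega
  obtain ⟨q₁, h₁, q₂, h₂, q₃, h₃, h₁₂, h₁₃, h₂₃⟩ := Finset.two_lt_card.mp hS
  have := separated _ h₁ _ h₂ h₁₂
  have := separated _ h₁ _ h₃ h₁₃
  have := separated _ h₂ _ h₃ h₂₃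
  omega

theorem pairwise_hasDetour_of_hamiltonian_cycle (hC : IsChordSet N C) (hcycle : (0, N) ∈ C)
    (hcycleF : (0, N) ∉ F)
    (hF : ∀ t, ∃ a b, (a, b) ∈ C ∧ (a, b) ≠ (0, N) ∧ ((a, b) ∈ F ↔ ¬ (a ≤ t ∧ t < b))) :
    (Set.Iic N).Pairwise (HasDetour (ChordOrientation N C Set.univ F) (Set.Iic N)) := by
  intro x hx y hy hxy
  rw [Set.mem_Iic] at hx hy
  have := hC hcycle
  rcases hxy.lt_or_gt with hlt | hgt
  · obtain ⟨a, b, hab, -, habF⟩ := hF N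
    have := hC hab
    exact hasDetour_of_lt hC hab (habF.mpr (by omega)) hlt hy
  by_cases hgap : y + 1 < x
  · exact .of_reachesAvoiding (w := y + 1) <|
      (ascend).trans <| (jumpDown hcycle hcycleF).trans ascend
  obtain rfl : x = y + 1 := by omega
  obtain ⟨a, b, hab, hne, habF⟩ := hF y
  have := hC hab
  rw [Ne, Prod.mk.injEq] at hne
  by_cases hin : a ≤ y ∧ y < b
  · have hdown : (a, b) ∉ F := fun h => habF.mp h hin
    rcases lt_or_eq_of_le (hC hab).2 with hbN | rfl
    · exact .of_reachesAvoiding (w := N) <| (ascend).trans <| (jumpDown hab hdown).trans ascend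
    · exact .of_reachesAvoiding (w := 0) <| (ascend).trans <| (jumpDown hab hdown).trans ascend
  · have hup := habF.mpr hin
    by_cases hya : y < a
    · exact .of_reachesAvoiding (w := a + 1) <| (ascend).trans <| (jumpUp hab hup).trans <|
        (ascend).trans <| (jumpDown hcycle hcycleF).trans ascend
    · exact .of_reachesAvoiding (w := a + 1) <| (ascend).trans <|
        (jumpDown hcycle hcycleF).trans <| (ascend).trans <| (jumpUp hab hup).trans ascend

theorem detourable_of_hamiltonian_cycle (hC : IsChordSet N C) (hcycle : (0, N) ∈ C)
    (hcard : 4 ≤ C.card) : Detourable N C := by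
  have hS : 2 < (C.erase (0, N)).card := by
    rw [Finset.card_erase_of_mem hcycle]
    omega
  obtain ⟨F, hFS, hF⟩ := exists_subset_forall_exists_mem_iff_notMem_Ico hS
  refine ⟨Set.univ, F, pairwise_hasDetour_of_hamiltonian_cycle hC hcycle
    (fun h => Finset.notMem_erase _ _ (hFS h)) fun t => ?_⟩
  obtain ⟨⟨a, b⟩, hab, habF⟩ := hF t
  rw [Finset.mem_Ico] at habF
  exact ⟨a, b, Finset.mem_of_mem_erase hab, Finset.ne_of_mem_erase hab, habF⟩

section OverlappingEnds

variable {p q : ℕ}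

theorem pairwise_hasDetour_of_overlapping (hC : IsChordSet N C) (hb : (0, b) ∈ C)
    (hbF : (0, b) ∉ F) (ha : (a, N) ∈ C) (haF : (a, N) ∉ F) (ha1 : 1 ≤ a) (hab : a ≤ b)
    (hbN : b < N) (hpq : (p, q) ∈ C) (hpqF : (p, q) ∈ F)
    (hcross : HasDetour (ChordOrientation N C Set.univ F) (Set.Iic N) (b + 1) (a - 1)) :
    (Set.Iic N).Pairwise (HasDetour (ChordOrientation N C Set.univ F) (Set.Iic N)) := by
  intro x hx y hy hxy
  rw [Set.mem_Iic] at hx hy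
  have := hC hb
  have := hC ha
  rcases hxy.lt_or_gt with hlt | hgt
  · exact hasDetour_of_lt hC hpq hpqF hlt hy
  by_cases hxb : x ≤ b
  · exact .of_reachesAvoiding (w := N) <| (ascend).trans <| (jumpDown hb hbF).trans ascend
  by_cases hya : a ≤ y
  · exact .of_reachesAvoiding (w := 0) <| (ascend).trans <| (jumpDown ha haF).trans ascend
  by_cases hya' : y + 1 < a
  · exact .of_reachesAvoiding (w := y + 1) <| (ascend).trans <| (jumpDown ha haF).trans <|
      (ascend).trans <| (jumpDown hb hbF).trans ascend
  by_cases hxb' : b + 1 < x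
  · exact .of_reachesAvoiding (w := b + 1) <| (ascend).trans <| (jumpDown ha haF).trans <|
      (ascend).trans <| (jumpDown hb hbF).trans ascend
  obtain ⟨rfl, rfl⟩ : x = b + 1 ∧ y = a - 1 := by omega
  exact hcross

theorem hasDetour_of_overlapping_of_shortcut (hC : IsChordSet N C) (hb : (0, b) ∈ C)
    (hbF : (0, b) ∉ F) (ha : (a, N) ∈ C) (haF : (a, N) ∉ F) (ha1 : 1 ≤ a) (hab : a ≤ b)
    (hbN : b < N) (hpq : (p, q) ∈ C) (hpqF : (p, q) ∈ F)
    (hside : q < a ∨ (a ≤ p ∧ q ≤ b) ∨ b < p) :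
    HasDetour (ChordOrientation N C Set.univ F) (Set.Iic N) (b + 1) (a - 1) := by
  have := hC hpq
  refine .of_reachesAvoiding (w := p + 1) ?_
  rcases hside with hlow | hmid | hhigh
  · exact (ascend).trans <| (jumpDown ha haF).trans <| (ascend).trans <|
      (jumpDown hb hbF).trans <| (ascend).trans <| (jumpUp hpq hpqF).trans ascend
  · exact (ascend).trans <| (jumpDown ha haF).trans <| (ascend).trans <|
      (jumpUp hpq hpqF).trans <| (ascend).trans <| (jumpDown hb hbF).trans ascend
  · exact (ascend).trans <| (jumpUp hpq hpqF).trans <| (ascend).trans <|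
      (jumpDown ha haF).trans <| (ascend).trans <| (jumpDown hb hbF).trans ascend

theorem hasDetour_of_overlapping_of_crossing (hC : IsChordSet N C) (hb : (0, b) ∈ C)
    (hbF : (0, b) ∉ F) (ha : (a, N) ∈ C) (haF : (a, N) ∉ F) (ha1 : 1 ≤ a) (hab : a ≤ b)
    (hbN : b < N) (hpq : (p, q) ∈ C) (hpqF : (p, q) ∉ F) (hpqb : (p, q) ≠ (0, b))
    (hpqa : (p, q) ≠ (a, N))
    (hside : ¬ (q < a ∨ (a ≤ p ∧ q ≤ b) ∨ b < p)) :
    HasDetour (ChordOrientation N C Set.univ F) (Set.Iic N) (b + 1) (a - 1) := by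
  have := hC hpq
  rw [Ne, Prod.mk.injEq] at hpqb hpqa
  rcases lt_trichotomy q b with hqb | rfl | hbq
  · exact .of_reachesAvoiding (w := b) <| (ascend).trans <| (jumpDown ha haF).trans <|
      (ascend).trans <| (jumpDown hpq hpqF).trans ascend
  · exact .of_reachesAvoiding (w := 0) <| (ascend).trans <| (jumpDown ha haF).trans <|
      (ascend).trans <| (jumpDown hpq hpqF).trans ascend
  by_cases hpa : p < a
  · exact .of_reachesAvoiding (w := a) <| (ascend).trans <| (jumpDown hpq hpqF).trans ascend
  rcases lt_or_eq_of_le (hC hpq).2 with hqN | hqN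
  · exact .of_reachesAvoiding (w := N) <| (ascend).trans <| (jumpDown hpq hpqF).trans <|
      (ascend).trans <| (jumpDown hb hbF).trans ascend
  · exact .of_reachesAvoiding (w := a) <| (ascend).trans <| (jumpDown hpq hpqF).trans <|
      (ascend).trans <| (jumpDown hb hbF).trans ascend

theorem detourable_of_overlapping (hC : IsChordSet N C) (hb : (0, b) ∈ C) (ha : (a, N) ∈ C)
    (ha1 : 1 ≤ a) (hab : a ≤ b) (hbN : b < N) (hcard : 4 ≤ C.card) : Detourable N C := by
  have hS : 1 < (C \ {(0, b), (a, N)}).card := by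
    have := Finset.le_card_sdiff {(0, b), (a, N)} C
    have := Finset.card_le_two (a := ((0, b) : ℕ × ℕ)) (b := (a, N))
    omega
  by_cases hside : ∃ p q, (p, q) ∈ C \ {(0, b), (a, N)} ∧ (q < a ∨ (a ≤ p ∧ q ≤ b) ∨ b < p)
  · obtain ⟨p, q, hpq, hside⟩ := hside
    simp only [Finset.mem_sdiff, Finset.mem_insert, Finset.mem_singleton, not_or] at hpq
    obtain ⟨hpq, hneb, hnea⟩ := hpq
    exact ⟨Set.univ, {(p, q)}, pairwise_hasDetour_of_overlapping hC hb (Ne.symm hneb) ha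
      (Ne.symm hnea) ha1 hab hbN hpq rfl (hasDetour_of_overlapping_of_shortcut hC hb
        (Ne.symm hneb) ha (Ne.symm hnea) ha1 hab hbN hpq rfl hside)⟩
  · obtain ⟨⟨p, q⟩, hpq, ⟨p', q'⟩, hpq', hne⟩ := Finset.one_lt_card.mp hS
    have hside' := fun h => hside ⟨p', q', hpq', h⟩
    simp only [Finset.mem_sdiff, Finset.mem_insert, Finset.mem_singleton, not_or] at hpq hpq'
    obtain ⟨hpq, hneb, hnea⟩ := hpq
    obtain ⟨hpq', hneb', hnea'⟩ := hpq'
    exact ⟨Set.univ, {(p, q)}, pairwise_hasDetour_of_overlapping hC hb (Ne.symm hneb) ha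
      (Ne.symm hnea) ha1 hab hbN hpq rfl (hasDetour_of_overlapping_of_crossing hC hb
        (Ne.symm hneb) ha (Ne.symm hnea) ha1 hab hbN hpq' hne.symm hneb' hnea' hside')⟩

end OverlappingEnds

theorem detourable_of_three_cycles (hC : IsChordSet N C) (hb : (0, b) ∈ C) (hbc : (b, c) ∈ C)
    (hc : (c, N) ∈ C) (hcard : 4 ≤ C.card) : Detourable N C := by
  have hlt : ({(0, b), (b, c), (c, N)} : Finset (ℕ × ℕ)).card < C.card := by
    have := Finset.card_le_three (a := ((0, b) : ℕ × ℕ)) (b := (b, c)) (c := (c, N))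
    omega
  obtain ⟨⟨p, q⟩, hpq, hne⟩ := Finset.exists_mem_notMem_of_card_lt_card hlt
  simp only [Finset.mem_insert, Finset.mem_singleton, not_or, eq_comm (a := (p, q))] at hne
  obtain ⟨hbF, hbcF, hcF⟩ := hne
  refine ⟨Set.univ, {(p, q)}, fun x hx y hy hxy => ?_⟩
  rw [Set.mem_Iic] at hx hy
  have := hC hb
  have := hC hbc
  have := hC hc
  rcases hxy.lt_or_gt with hlt | hgt
  · exact hasDetour_of_lt hC hpq rfl hlt hy
  by_cases hxb : x ≤ b
  · exact .of_reachesAvoiding (w := N) <| (ascend).trans <| (jumpDown hb hbF).trans ascend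
  by_cases hyc : c ≤ y
  · exact .of_reachesAvoiding (w := 0) <| (ascend).trans <| (jumpDown hc hcF).trans ascend
  by_cases hxc : x ≤ c
  · have to_b : ReachesAvoiding (ChordOrientation N C Set.univ {(p, q)}) N x b :=
      (ascend).trans (jumpDown hbc hbcF)
    by_cases hyb : b ≤ y
    · exact .of_reachesAvoiding (w := N) <| to_b.trans ascend
    · exact .of_reachesAvoiding (w := N) <| to_b.trans <| (jumpDown hb hbF).trans ascend
  · by_cases hyb : b ≤ y
    · exact .of_reachesAvoiding (w := 0) <| (ascend).trans <| (jumpDown hc hcF).trans <|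
        (jumpDown hbc hbcF).trans ascend
    · exact .of_reachesAvoiding (w := b + 1) <| (ascend).trans <| (jumpDown hc hcF).trans <|
        (jumpDown hbc hbcF).trans <| (jumpDown hb hbF).trans ascend

section Ear

variable {c d : ℕ}

/-- The orientation in which the path points up exactly between `a` and `d`, and among the chords
only `(0, b)` and `(c, N)` point up. -/
abbrev EarOrientation (N : ℕ) (C : Finset (ℕ × ℕ)) (a b c d : ℕ) : ℕ → ℕ → Prop :=
  ChordOrientation N C (Set.Ico a d) {(0, b), (c, N)}

theorem EarOrientation.reachesAvoiding_of_spans {z : ℕ} (hspan : Spans C a w d) (haw : a ≤ w)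
    (hdN : d < N) (ha : 1 ≤ a) (hza : z ≠ a) (hz : z ≤ w ∨ d < z) (hv : v = a ∨ w < v)
    (hvd : v ≤ d) : ReachesAvoiding (EarOrientation N C a b c d) z v a := by
  refine hspan.reachesAvoiding hdN.le (fun i hi hid => ⟨by omega, hid⟩) (fun p q _ hp hq => ?_)
    hza hz hv hvd
  simp only [Set.mem_insert_iff, Set.mem_singleton_iff, Prod.mk.injEq]
  omega

theorem EarOrientation.hasDetour_of_le {x y : ℕ} (hb : (0, b) ∈ C) (ha : 1 ≤ a) (hab : a < b)
    (hbd : b ≤ d) (hdN : d < N) (hspan : Spans C a a d) (hx : x ≤ d) (hy : y ≤ d) :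
    HasDetour (EarOrientation N C a b c d) (Set.Iic N) x y := by
  have to_a : ∀ v, a ≤ v → v ≤ d → ReachesAvoiding (EarOrientation N C a b c d) N v a :=
    fun v hv hvd =>
      reachesAvoiding_of_spans hspan le_rfl hdN ha (by omega) (by omega) (by omega) hvd
  have from_a : ReachesAvoiding (EarOrientation N C a b c d) N a y := by
    rcases le_total a y with hay | hya
    · exact ascend
    · exact descend
  rcases le_total a x with hax | hxa
  · exact .of_reachesAvoiding (w := N) <| (to_a x hax hx).trans from_a
  · exact .of_reachesAvoiding (w := N) <| (descend).trans <| (jumpUp hb).trans <|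
      (to_a b hab.le hbd).trans from_a

theorem EarOrientation.hasDetour_of_ge {x y : ℕ} (hC : IsChordSet N C) (hc : (c, N) ∈ C)
    (ha : 1 ≤ a) (hac : a ≤ c) (hcd : c ≤ d) (hdN : d < N) (hspan : Spans C a a d) (hax : a ≤ x)
    (hay : a ≤ y) (hx : x ≤ N) (hy : y ≤ N) :
    HasDetour (EarOrientation N C a b c d) (Set.Iic N) x y := by
  have := hC hc
  have to_a : ∀ v, a ≤ v → v ≤ d → ReachesAvoiding (EarOrientation N C a b c d) 0 v a :=
    fun v hv hvd =>
      reachesAvoiding_of_spans hspan le_rfl hdN ha (by omega) (by omega) (by omega) hvd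
  have from_a : ReachesAvoiding (EarOrientation N C a b c d) 0 a y := by
    rcases le_total y d with hyd | hdy
    · exact ascend
    · exact (ascend).trans <| (jumpUp hc).trans descend
  rcases le_total x d with hxd | hdx
  · exact .of_reachesAvoiding (w := 0) <| (to_a x hax hxd).trans from_a
  · exact .of_reachesAvoiding (w := 0) <| (descend).trans <| (to_a d (by omega) le_rfl).trans from_a

theorem detourable_of_ear (hC : IsChordSet N C) (hb : (0, b) ∈ C) (hc : (c, N) ∈ C) (ha : 1 ≤ a)
    (hab : a < b) (hbc : b < c) (hcd : c ≤ d) (hdN : d < N) (hspan : Spans C a b d) :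
    Detourable N C := by
  have hspan' : Spans C a a d := hspan.fill hab.le (by omega)
  have := hC hc
  refine ⟨Set.Ico a d, {(0, b), (c, N)}, fun x hx y hy hxy => ?_⟩
  rw [Set.mem_Iic] at hx hy
  by_cases hd : x ≤ d ∧ y ≤ d
  · exact EarOrientation.hasDetour_of_le hb ha hab (by omega) hdN hspan' hd.1 hd.2
  by_cases ha' : a ≤ x ∧ a ≤ y
  · exact EarOrientation.hasDetour_of_ge hC hc ha (by omega) hcd hdN hspan' ha'.1 ha'.2 hx hy
  rcases hxy.lt_or_gt with hlt | hgt
  · exact .of_reachesAvoiding (w := a) <| (descend).trans <| (jumpUp hb).trans <|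
      (ascend).trans <| (jumpUp hc).trans descend
  · exact .of_reachesAvoiding (w := b) <| (descend).trans <|
      (EarOrientation.reachesAvoiding_of_spans hspan hab.le hdN ha (by omega) (by omega) (by omega)
        le_rfl).trans descend

end Ear

section Reversal

variable {c q : ℕ}

/-- The orientation in which the path points down exactly between `b` and `a`, and among the
chords only `(b, q)` points up. -/
abbrev ReversalOrientation (N : ℕ) (C : Finset (ℕ × ℕ)) (a b q : ℕ) : ℕ → ℕ → Prop :=
  ChordOrientation N C (Set.Ico b a)ᶜ {(b, q)}

namespace ReversalOrientation

theorem reachesAvoiding_of_spans {z : ℕ} (hba : b < a) (hcN : c ≤ N) (hspan : Spans C a a c)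
    (hz : z < a ∨ c < z) (hv : a ≤ v) (hvc : v ≤ c) :
    ReachesAvoiding (ReversalOrientation N C a b q) z v a := by
  refine hspan.reachesAvoiding hcN (fun i hi _ hmem => hmem.2.not_gt hi)
    (fun r s _ hr _ => ?_) (by omega) (by omega) (by omega) hvc
  simp only [Set.mem_singleton_iff, Prod.mk.injEq]
  omega

theorem reachesAvoiding_left {z : ℕ} (hba : b < a) (hcN : c ≤ N) (hspan : Spans C a a c)
    (hz : z < b ∨ c < z) (hac : a ≤ c) (hv : b ≤ v) (hvc : v ≤ c) :
    ReachesAvoiding (ReversalOrientation N C a b q) z v b := by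
  rcases le_total a v with hav | hva
  · exact (reachesAvoiding_of_spans hba hcN hspan (by omega) hav hvc).trans descend
  · exact descend

theorem reachesAvoiding_right {z : ℕ} (hbq : (b, q) ∈ C) (hba : b < a) (haq : a ≤ q)
    (hqc : q ≤ c) (hcN : c ≤ N) (hspan : Spans C a a c) (hz : z < b ∨ c < z ∧ v < z) (hv : b ≤ v)
    (hvN : v ≤ N) : ReachesAvoiding (ReversalOrientation N C a b q) z b v := by
  have to_a : ReachesAvoiding (ReversalOrientation N C a b q) z b a :=
    (jumpUp hbq).trans (reachesAvoiding_of_spans hba hcN hspan (by omega) haq hqc)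
  rcases le_total a v with hav | hva
  · exact to_a.trans ascend
  · exact to_a.trans descend

theorem hasDetour_of_le {x y : ℕ} (hb : (0, b) ∈ C) (hbq : (b, q) ∈ C) (hba : b < a)
    (haq : a ≤ q) (hqc : q ≤ c) (hcN : c < N) (hspan : Spans C a a c) (hx : x ≤ c) (hy : y ≤ c) :
    HasDetour (ReversalOrientation N C a b q) (Set.Iic N) x y := by
  have to_b : ReachesAvoiding (ReversalOrientation N C a b q) N x b := by
    rcases le_total b x with hbx | hxb
    · exact reachesAvoiding_left hba hcN.le hspan (by omega) (by omega) hbx hx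
    · exact ascend
  rcases le_total b y with hby | hyb
  · exact .of_reachesAvoiding (w := N) <|
      to_b.trans (reachesAvoiding_right hbq hba haq hqc hcN.le hspan (by omega) hby (by omega))
  · exact .of_reachesAvoiding (w := N) <| to_b.trans <| (jumpDown hb).trans ascend

theorem hasDetour_of_ge {x y : ℕ} (hc : (c, N) ∈ C) (hbq : (b, q) ∈ C) (hb : 0 < b) (hba : b < a)
    (haq : a ≤ q) (hqc : q ≤ c) (hcN : c < N) (hspan : Spans C a a c) (hbx : b ≤ x) (hby : b ≤ y)
    (hx : x ≤ N) (hy : y ≤ N) :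
    HasDetour (ReversalOrientation N C a b q) (Set.Iic N) x y := by
  have to_b : ∀ v, b ≤ v → v ≤ c → ReachesAvoiding (ReversalOrientation N C a b q) 0 v b :=
    fun v => reachesAvoiding_left hba hcN.le hspan (by omega) (by omega)
  have from_b : ReachesAvoiding (ReversalOrientation N C a b q) 0 b y :=
    reachesAvoiding_right hbq hba haq hqc hcN.le hspan (by omega) hby hy
  rcases le_total x c with hxc | hcx
  · exact .of_reachesAvoiding (w := 0) <| (to_b x hbx hxc).trans from_b
  · exact .of_reachesAvoiding (w := 0) <|
      (ascend).trans <| (jumpDown hc).trans <| (to_b c (by omega) le_rfl).trans from_b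

end ReversalOrientation

theorem detourable_of_reversal (hC : IsChordSet N C) (hb : (0, b) ∈ C) (hbq : (b, q) ∈ C)
    (hc : (c, N) ∈ C) (hba : b < a) (haq : a ≤ q) (hqc : q ≤ c) (hspan : Spans C a a c)
    (haw : a < w) (hwc : w < c)
    (hw : ReachesAvoiding (ReversalOrientation N C a b q) w c a) : Detourable N C := by
  have := hC hb
  have := hC hbq
  have := hC hc
  refine ⟨(Set.Ico b a)ᶜ, {(b, q)}, fun x hx y hy hxy => ?_⟩
  rw [Set.mem_Iic] at hx hy
  by_cases hc' : x ≤ c ∧ y ≤ c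
  · exact ReversalOrientation.hasDetour_of_le hb hbq hba haq hqc (by omega) hspan hc'.1 hc'.2
  by_cases hb' : b ≤ x ∧ b ≤ y
  · exact ReversalOrientation.hasDetour_of_ge hc hbq (by omega) hba haq hqc (by omega) hspan
      hb'.1 hb'.2 hx hy
  rcases hxy.lt_or_gt with hlt | hgt
  · exact .of_reachesAvoiding (w := b + 1) <| (ascend).trans <| (jumpUp hbq).trans ascend
  · exact .of_reachesAvoiding (w := w) <| (ascend).trans <| (jumpDown hc).trans <| hw.trans <|
      (descend).trans <| (jumpDown hb).trans ascend

theorem detourable_of_reversal_of_spans (hC : IsChordSet N C) (hb : (0, b) ∈ C) (hbq : (b, q) ∈ C)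
    (hc : (c, N) ∈ C) (hba : b < a) (haq : a < q) (hqc : q < c) (hspan : Spans C a q c) :
    Detourable N C := by
  have := hC hc
  refine detourable_of_reversal hC hb hbq hc hba haq.le hqc.le (hspan.fill haq.le hqc) haq hqc
    (hspan.reachesAvoiding (by omega) (fun i hi _ hmem => (hmem.2.trans haq).not_gt hi)
      (fun r s _ hr _ => ?_) (by omega) (by omega) (by omega) le_rfl)
  simp only [Set.mem_singleton_iff, Prod.mk.injEq]
  omega

theorem detourable_of_reversal_of_mem {p : ℕ} (hC : IsChordSet N C) (hb : (0, b) ∈ C)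
    (hbq : (b, q) ∈ C) (hpc : (p, c) ∈ C) (hc : (c, N) ∈ C) (hba : b < a) (haq : a ≤ q)
    (hqc : q ≤ c) (hap : a ≤ p) (hspan : Spans C a a p) : Detourable N C := by
  have := hC hpc
  have hspan' : Spans C a a c := by
    intro v hav hvc
    rcases le_or_gt v p with hvp | hpv
    · obtain ⟨r, s, hrs, hr, hrv, hvs, hsp⟩ := hspan v hav hvp
      exact ⟨r, s, hrs, hr, hrv, hvs, by omega⟩
    · exact ⟨p, c, hpc, by omega, hpv, hvc, le_rfl⟩
  refine detourable_of_reversal hC hb hbq hc hba haq hqc hspan' (w := p + 1) (by omega) (by omega)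
    ((jumpDown hpc).trans ?_)
  exact ReversalOrientation.reachesAvoiding_of_spans hba (by omega) hspan (by omega) hap le_rfl

end Reversal

section Greedy

variable {s t c d p q r : ℕ}

/-- `(a, b)` crosses from `[0, s]` to above `s`, and no chord starting in `[0, s]` reaches
further up. -/
structure IsRightmostCrossing (C : Finset (ℕ × ℕ)) (s a b : ℕ) : Prop where
  mem : (a, b) ∈ C
  left_le : a ≤ s
  lt_right : s < b
  right_le_right : ∀ ⦃p q⦄, (p, q) ∈ C → p ≤ s → q ≤ b

/-- `(a, b)` crosses from below `t` to `[t, N]`, and no chord ending in `[t, N]` reaches further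
down. -/
structure IsLeftmostCrossing (C : Finset (ℕ × ℕ)) (t a b : ℕ) : Prop where
  mem : (a, b) ∈ C
  left_lt : a < t
  le_right : t ≤ b
  left_le_left : ∀ ⦃p q⦄, (p, q) ∈ C → t ≤ q → a ≤ p

theorem Spans.exists_isRightmostCrossing (h : Spans C 0 0 N) (hs : s < N) :
    ∃ a b, IsRightmostCrossing C s a b := by
  obtain ⟨a, b, hab, -, has, hsb, -⟩ := h (s + 1) (by omega) (by omega)
  obtain ⟨⟨p, q⟩, hpq, hmax⟩ := (C.filter (·.1 ≤ s)).exists_max_image Prod.snd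
    ⟨(a, b), Finset.mem_filter.mpr ⟨hab, by simp only; omega⟩⟩
  simp only [Finset.mem_filter, Prod.forall] at hpq hmax
  have := hmax a b ⟨hab, by omega⟩
  exact ⟨p, q, hpq.1, hpq.2, by omega, fun p' q' hpq' hp' => hmax p' q' ⟨hpq', hp'⟩⟩

theorem Spans.exists_isLeftmostCrossing (h : Spans C 0 0 N) (ht : 0 < t) (htN : t ≤ N) :
    ∃ a b, IsLeftmostCrossing C t a b := by
  obtain ⟨a, b, hab, -, hat, htb, -⟩ := h t ht htN
  obtain ⟨⟨p, q⟩, hpq, hmin⟩ := (C.filter (t ≤ ·.2)).exists_min_image Prod.fst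
    ⟨(a, b), Finset.mem_filter.mpr ⟨hab, htb⟩⟩
  simp only [Finset.mem_filter, Prod.forall] at hpq hmin
  have := hmin a b ⟨hab, htb⟩
  exact ⟨p, q, hpq.1, by omega, hpq.2, fun p' q' hpq' hp' => hmin p' q' ⟨hpq', hp'⟩⟩

theorem IsRightmostCrossing.mirror (hC : IsChordSet N C) (h : IsRightmostCrossing C s a b) :
    IsLeftmostCrossing (mirror N C) (N - s) (N - b) (N - a) := by
  obtain ⟨hab, has, hsb, hmax⟩ := h
  have := hC hab
  refine ⟨sub_mem_mirror hab, by omega, by omega, fun p q hpq hq => ?_⟩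
  have := hC.mirror hpq
  have := hmax ((mem_mirror hC).mp hpq).2 (by omega)
  omega

theorem IsLeftmostCrossing.mirror (hC : IsChordSet N C) (h : IsLeftmostCrossing C t a b) :
    IsRightmostCrossing (mirror N C) (N - t) (N - b) (N - a) := by
  obtain ⟨hab, hat, htb, hmin⟩ := h
  have := hC hab
  refine ⟨sub_mem_mirror hab, by omega, by omega, fun p q hpq hq => ?_⟩
  have := hC.mirror hpq
  have := hmin ((mem_mirror hC).mp hpq).2 (by omega)
  omega

theorem Spans.of_crossings (h : Spans C 0 0 N) (hdN : d ≤ N) (hR : IsRightmostCrossing C s a b)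
    (hL : IsLeftmostCrossing C t c d) (hsc : s < c) (hbd : b ≤ d) : Spans C a s d := by
  intro v hsv hvd
  have := hR.left_le
  rcases lt_or_ge c v with hcv | hvc
  · exact ⟨c, d, hL.mem, by omega, hcv, hvd, le_rfl⟩
  rcases le_or_gt v b with hvb | hbv
  · exact ⟨a, b, hR.mem, by omega, by omega, hvb, hbd⟩
  obtain ⟨p, q, hpq, -, hpv, hvq, -⟩ := h v (by omega) (by omega)
  have := hR.right_le_right hpq
  have := hL.left_le_left hpq
  have := hL.le_right
  exact ⟨p, q, hpq, by omega, hpv, hvq, by omega⟩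

theorem detourable_of_bridging (hC : IsChordSet N C) (hb : IsRightmostCrossing C 0 0 b)
    (hc : IsLeftmostCrossing C N c N) (hbc : b < c) (had : (a, d) ∈ C) (hab : a < b)
    (hcd : c ≤ d) : Detourable N C := by
  have := hb.right_le_right had
  have := hc.left_le_left had
  exact detourable_of_ear hC hb.mem hc.mem (by omega) hab hbc hcd (by omega)
    fun v hbv hvd => ⟨a, d, had, .inl rfl, by omega, hvd, le_rfl⟩

theorem detourable_of_loose (hC : IsChordSet N C) (hspan : Spans C 0 0 N)
    (hb : IsRightmostCrossing C 0 0 b) (hc : IsLeftmostCrossing C N c N)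
    (hR : IsRightmostCrossing C b a q) (hL : IsLeftmostCrossing C c p d) (hab : a < b)
    (hqc : q < c) : Detourable N C := by
  have := hC hL.mem
  have := hL.left_lt
  have := hL.le_right
  have := hR.lt_right
  have := hb.right_le_right hR.mem
  have := hc.left_le_left hL.mem
  have := hR.right_le_right hL.mem
  exact detourable_of_ear hC hb.mem hc.mem (by omega) hab (by omega) hL.le_right (by omega)
    (hspan.of_crossings (by omega) hR hL (by omega) (by omega))

theorem detourable_of_tight_of_tight (hC : IsChordSet N C) (hspan : Spans C 0 0 N)
    (hb : (0, b) ∈ C) (hc : (c, N) ∈ C) (hR : IsRightmostCrossing C b b q) (hpc : (p, c) ∈ C)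
    (hL : IsLeftmostCrossing C p r p) (hqp : q < p) : Detourable N C := by
  have := hC hpc
  have := hC hc
  have := hR.right_le_right hL.mem
  suffices ∃ a, b < a ∧ a ≤ q ∧ Spans C a a p by
    obtain ⟨a, hba, haq, hspan'⟩ := this
    exact detourable_of_reversal_of_mem hC hb hR.mem hpc hc hba haq (by omega) (by omega) hspan'
  rcases le_or_gt r q with hrq | hqr
  · exact ⟨r, by omega, hrq, fun v hrv hvp => ⟨r, p, hL.mem, .inl rfl, hrv, hvp, le_rfl⟩⟩
  · obtain ⟨a, e, hae⟩ := hspan.exists_isRightmostCrossing (s := q) (by omega)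
    have := hae.left_le
    have := hae.lt_right
    have := hR.right_le_right hae.mem
    have := hL.left_le_left hae.mem
    exact ⟨a, by omega, by omega,
      (hspan.of_crossings (by omega) hae hL hqr (by omega)).fill (by omega) hqp⟩

theorem detourable_of_tight (hC : IsChordSet N C) (hspan : Spans C 0 0 N) (hb : (0, b) ∈ C)
    (hc : (c, N) ∈ C) (hR : IsRightmostCrossing C b b q) (hL : IsLeftmostCrossing C c p c)
    (hqc : q < c) : Detourable N C := by
  have := hC hc
  have := hC hL.mem
  have := hR.right_le_right hL.mem
  rcases le_or_gt p q with hpq | hqp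
  · exact detourable_of_reversal_of_mem hC hb hR.mem hL.mem hc (by omega) hpq hqc.le le_rfl
      fun v hv hv' => by omega
  obtain ⟨a, e, hae⟩ := hspan.exists_isRightmostCrossing (s := q) (by omega)
  have := hae.lt_right
  have := hR.right_le_right hae.mem
  have := hL.left_le_left hae.mem
  rcases hae.left_le.lt_or_eq with haq | rfl
  · exact detourable_of_reversal_of_spans hC hb hR.mem hc (by omega) haq hqc
      (hspan.of_crossings (by omega) hae hL hqp (by omega))
  · have hcm : (0, N - c) ∈ mirror N C := by simpa using sub_mem_mirror (N := N) hc
    exact .of_mirror hC <| detourable_of_tight_of_tight hC.mirror hspan.mirror hcm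
      (sub_mem_mirror hb) (hL.mirror hC) (sub_mem_mirror hR.mem) (hae.mirror hC) (by omega)

theorem detourable_of_separated (hC : IsChordSet N C) (hspan : Spans C 0 0 N)
    (hcard : 4 ≤ C.card) (hb : IsRightmostCrossing C 0 0 b) (hc : IsLeftmostCrossing C N c N)
    (hbc : b < c) : Detourable N C := by
  have := hC hc.mem
  have hcm : IsRightmostCrossing (mirror N C) 0 0 (N - c) := by simpa using hc.mirror hC
  have hbm : IsLeftmostCrossing (mirror N C) N (N - b) N := by simpa using hb.mirror hC
  by_cases hbridge : ∃ a d, (a, d) ∈ C ∧ a ≤ b ∧ c ≤ d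
  · obtain ⟨a, d, had, hab, hcd⟩ := hbridge
    rcases hab.lt_or_eq with hab | rfl
    · exact detourable_of_bridging hC hb hc hbc had hab hcd
    rcases hcd.lt_or_eq with hcd | rfl
    · have := hC had
      exact .of_mirror hC <| detourable_of_bridging hC.mirror hcm hbm (by omega)
        (sub_mem_mirror had) (by omega) (by omega)
    · exact detourable_of_three_cycles hC hb.mem had hc.mem hcard
  push Not at hbridge
  obtain ⟨a, q, hR⟩ := hspan.exists_isRightmostCrossing (s := b) (by omega)
  obtain ⟨p, d, hL⟩ := hspan.exists_isLeftmostCrossing (t := c) (by omega) (by omega)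
  have hqc : q < c := hbridge a q hR.mem hR.left_le
  rcases hR.left_le.lt_or_eq with hab | rfl
  · exact detourable_of_loose hC hspan hb hc hR hL hab hqc
  rcases hL.le_right.lt_or_eq with hcd | rfl
  · have := hC hL.mem
    have := hbridge p d hL.mem
    exact .of_mirror hC <| detourable_of_loose hC.mirror hspan.mirror hcm hbm (hL.mirror hC)
      (hR.mirror hC) (by omega) (by omega)
  · exact detourable_of_tight hC hspan hb.mem hc.mem hR hL hqc

theorem detourable_of_spans (hC : IsChordSet N C) (hspan : Spans C 0 0 N) (hcard : 4 ≤ C.card) :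
    Detourable N C := by
  obtain ⟨⟨u, v⟩, huv⟩ := Finset.card_pos.mp (by omega : 0 < C.card)
  have := hC huv
  obtain ⟨a, b, hb⟩ := hspan.exists_isRightmostCrossing (s := 0) (by omega)
  obtain rfl : a = 0 := Nat.le_zero.mp hb.left_le
  obtain ⟨c, d, hc⟩ := hspan.exists_isLeftmostCrossing (t := N) (by omega) le_rfl
  obtain rfl : d = N := hc.le_right.antisymm' (hC hc.mem).2
  rcases (hC hb.mem).2.eq_or_lt with rfl | hbN
  · exact detourable_of_hamiltonian_cycle hC hb.mem hcard
  have hc1 : 1 ≤ c := by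
    by_contra! hc0
    have := hb.right_le_right hc.mem (by omega)
    omega
  rcases le_or_gt c b with hcb | hbc
  · exact detourable_of_overlapping hC hb.mem hc.mem hc1 hcb hbN hcard
  · exact detourable_of_separated hC hspan hcard hb hc hbc

end Greedy

end ChordOrientations

section HamiltonianPaths

variable {V : Type*} {G : SimpleGraph V} {R : V → V → Prop} {N : ℕ} {p : ℕ → V}

open Classical in
/-- The edges of `G` joining non-consecutive vertices of the path `p 0, …, p N`. -/
noncomputable def pathChords (G : SimpleGraph V) (N : ℕ) (p : ℕ → V) : Finset (ℕ × ℕ) :=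
  {q ∈ Finset.Iic N ×ˢ Finset.Iic N | q.1 + 2 ≤ q.2 ∧ G.Adj (p q.1) (p q.2)}

theorem mem_pathChords {a b : ℕ} :
    (a, b) ∈ pathChords G N p ↔ a + 2 ≤ b ∧ b ≤ N ∧ G.Adj (p a) (p b) := by
  simp only [pathChords, Finset.mem_filter, Finset.mem_product, Finset.mem_Iic]
  exact ⟨fun ⟨⟨_, hb⟩, hab, hadj⟩ => ⟨hab, hb, hadj⟩,
    fun ⟨hab, hb, hadj⟩ => ⟨⟨by omega, hb⟩, hab, hadj⟩⟩

theorem isChordSet_pathChords : IsChordSet N (pathChords G N p) := fun _ _ hab =>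
  ⟨(mem_pathChords.mp hab).1, (mem_pathChords.mp hab).2.1⟩

-- A directed walk from the end of the path back to its start descends past every `v` along an
-- arc that cannot reverse an arc of the path.
theorem spans_pathChords (hG : IsPartialOrientation G R) (hR : StronglyConnected R)
    (hp : IsDirectedPath R N p) (hbij : Set.BijOn p (Set.Iic N) Set.univ) :
    Spans (pathChords G N p) 0 0 N := by
  intro v hv hvN
  have start_notMem : p 0 ∉ p '' Set.Icc v N := by
    rintro ⟨i, ⟨hvi, hiN⟩, hi⟩
    have := hp.injOn (Set.mem_Iic.mpr hiN) (Set.mem_Iic.mpr (Nat.zero_le N)) hi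
    omega
  obtain ⟨_, y, hby, ⟨b, ⟨hvb, hbN⟩, rfl⟩, hy⟩ := exists_rel_mem_notMem_of_reflTransGen
    (hR (p N) (p 0)) (Set.mem_image_of_mem p (Set.right_mem_Icc.mpr hvN)) start_notMem
  obtain ⟨a, haN, rfl⟩ := hbij.surjOn (Set.mem_univ y)
  have hav : a < v := not_le.mp fun hva => hy (Set.mem_image_of_mem p ⟨hva, haN⟩)
  have hne : b ≠ a + 1 := by
    rintro rfl
    exact hG.asymm hby (hp.arc a hbN)
  exact ⟨a, b, mem_pathChords.mpr ⟨by omega, hbN, (hG.adj hby).symm⟩, by omega, hav, hvb, hbN⟩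

theorem ncard_edgeSet_le_add_card_pathChords (hbij : Set.BijOn p (Set.Iic N) Set.univ) :
    G.edgeSet.ncard ≤ N + (pathChords G N p).card := by
  classical
  set E : Finset (Sym2 V) := (Finset.range N).image (fun i => s(p i, p (i + 1))) ∪
    (pathChords G N p).image (fun q => s(p q.1, p q.2))
  have mem_of_lt : ∀ a b, a < b → b ≤ N → G.Adj (p a) (p b) → s(p a, p b) ∈ E := by
    intro a b hab hb hadj
    rw [Finset.mem_union]
    obtain rfl | hlt := (Nat.succ_le_iff.mpr hab).eq_or_lt
    · exact .inl (Finset.mem_image.mpr ⟨a, Finset.mem_range.mpr hb, rfl⟩)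
    · exact .inr (Finset.mem_image_of_mem _ (mem_pathChords.mpr ⟨hlt, hb, hadj⟩))
  have subset : G.edgeSet ⊆ E := by
    intro e
    induction e with
    | _ x y =>
      intro hxy
      obtain ⟨a, ha, rfl⟩ := hbij.surjOn (Set.mem_univ x)
      obtain ⟨b, hb, rfl⟩ := hbij.surjOn (Set.mem_univ y)
      rcases lt_trichotomy a b with hab | rfl | hba
      · exact mem_of_lt a b hab hb hxy
      · exact absurd rfl (G.ne_of_adj hxy)
      · exact Sym2.eq_swap ▸ mem_of_lt b a hba ha hxy.symm
  calc G.edgeSet.ncard ≤ E.card := Set.ncard_coe_finset E ▸ Set.ncard_le_ncard subset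
    _ ≤ _ := Finset.card_union_le _ _
    _ ≤ N + (pathChords G N p).card := by
      grw [Finset.card_image_le, Finset.card_image_le, Finset.card_range]

theorem ChordOrientation.isPartialOrientation_map (hp : IsDirectedPath G.Adj N p) (up : Set ℕ)
    (F : Set (ℕ × ℕ)) :
    IsPartialOrientation G (Relation.Map (ChordOrientation N (pathChords G N p) up F) p p) where
  adj := by
    rintro _ _ ⟨a, b, hab, rfl, rfl⟩
    rcases hab with ⟨hi, -⟩ | ⟨hi, -⟩ | ⟨hab, -⟩ | ⟨hab, -⟩
    exacts [hp.arc _ hi, (hp.arc _ hi).symm, (mem_pathChords.mp hab).2.2,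
      (mem_pathChords.mp hab).2.2.symm]
  asymm := by
    rintro _ _ ⟨a, b, hab, rfl, rfl⟩ ⟨b', a', hba, hb, ha⟩
    have le := hab.le isChordSet_pathChords
    have le' := hba.le isChordSet_pathChords
    obtain rfl := hp.injOn le'.1 le.2 hb
    obtain rfl := hp.injOn le'.2 le.1 ha
    exact hab.asymm isChordSet_pathChords hba

theorem Detourable.exists_isOrientation_diamLE [Fintype V] (hp : IsDirectedPath G.Adj N p)
    (hbij : Set.BijOn p (Set.Iic N) Set.univ) (h : Detourable N (pathChords G N p)) :
    ∃ R, IsOrientation G R ∧ DiamLE R (Fintype.card V - 2) := by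
  obtain ⟨up, F, hdetour⟩ := h
  obtain ⟨R, hR, hle⟩ :=
    (ChordOrientation.isPartialOrientation_map hp up F).exists_isOrientation_ge
  refine ⟨R, hR, .mono hle (diamLE_of_pairwise_hasDetour ?_)⟩
  exact pairwise_hasDetour_of_bijOn hbij (fun a b hab =>
    ⟨(hab.le isChordSet_pathChords).1, (hab.le isChordSet_pathChords).2, a, b, hab, rfl, rfl⟩)
    hdetour

end HamiltonianPaths

theorem stmt_13 {V : Type*} [Fintype V] (G : SimpleGraph V)
    (hn : 5 ≤ Fintype.card V) (hbl : Bridgeless G)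
    (hsize : Fintype.card V + 3 ≤ G.edgeSet.ncard) :
    ∃ R : V → V → Prop, IsOrientation G R ∧ DiamLE R (Fintype.card V - 2) := by
  obtain ⟨R, hR, hstrong⟩ := hbl.exists_stronglyConnected_isOrientation
  rcases hstrong.diamLE_or_exists_hamiltonian_path with hdiam | ⟨N, p, hp, hbij⟩
  · exact ⟨R, hR, hdiam⟩
  have hpartial : IsPartialOrientation G R := hR.isPartialOrientation
  have hcard : Fintype.card V = N + 1 := by
    simpa using (Set.ncard_congr' hbij.equiv).symm
  have hedges := ncard_edgeSet_le_add_card_pathChords (G := G) hbij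
  have hdetour : Detourable N (pathChords G N p) :=
    detourable_of_spans isChordSet_pathChords (spans_pathChords hpartial hstrong hp hbij) (by omega)
  exact hdetour.exists_isOrientation_diamLE ⟨fun i hi => hpartial.adj (hp.arc i hi), hp.injOn⟩ hbij
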